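/- Let G be a commutative group and h : G → ℍˣ a group homomorphism into the multiplicative group of nonzero quaternions. Then there exists q ∈ ℍˣ such that q⁻¹·h(g)·q ∈ ℂˣ for every g ∈ G. (This is the claim of Section 4.1 that, for a discrete torus, every conjugacy class in Hom(Γ, ℍˣ)/ℍˣ of quaternionic monodromy representations of the abelian group Γ of deck transformations contains a complex representation.) -/

import Mathlib

/-!
If all the quaternions in a commuting family are real, there is nothing to do. Otherwise some member
`a` is not real. Its imaginary part `v` satisfies `v² = -‖v‖² = (‖v‖ i)²`, so `v + ‖v‖ i`, when
nonzero, conjugates `‖v‖ i` to `v`; when it vanishes, `j` does. Hence `a` is conjugate to the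
non-real complex number `w = Re a + ‖v‖ i`. The centralizer of `w` in the quaternions is `ℂ`, so the
conjugation carrying `a` to `w` carries everything that commutes with `a` into `ℂ`.
-/

noncomputable section

/-- The quaternions. -/
abbrev H : Type := Quaternion ℝ

/-- The embedding of `ℂ` into the quaternions as the real subalgebra spanned by `1` and `i`. -/
def toH (z : ℂ) : H := ⟨z.re, z.im, 0, 0⟩

theorem toH_eq_coeComplex (z : ℂ) : toH z = z := rfl

theorem semiconjBy_add_of_mul_self_eq {R : Type*} [NonUnitalNonAssocSemiring R] {x y : R}
    (h : x * x = y * y) : SemiconjBy (x + y) y x := by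
  rw [SemiconjBy, add_mul, mul_add, h, add_comm]

theorem isConj_coeComplex_star (z : ℂ) : IsConj (z : H) (star (z : H)) := by
  obtain ⟨j, hre, hI, hJ, hK⟩ : ∃ j : H, j.re = 0 ∧ j.imI = 0 ∧ j.imJ = 1 ∧ j.imK = 0 :=
    ⟨⟨0, 0, 1, 0⟩, rfl, rfl, rfl, rfl⟩
  have hj : j ≠ 0 := by
    rintro rfl
    exact zero_ne_one hJ
  have hjz : j * z = star (z : H) * j := by ext <;> simp [hre, hI, hJ, hK]
  exact ⟨Units.mk0 j hj, hjz⟩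

theorem mul_self_eq_coeComplex_norm_of_re_eq_zero {v : H} (hv : v.re = 0) :
    v * v = ((⟨0, ‖v‖⟩ : ℂ) : H) * ((⟨0, ‖v‖⟩ : ℂ) : H) := by
  rw [← sq, Quaternion.sq_eq_neg_normSq.mpr hv, Quaternion.normSq_eq_norm_mul_self]
  ext <;> simp

theorem isConj_coeComplex_norm_of_re_eq_zero {v : H} (hv : v.re = 0) :
    IsConj ((⟨0, ‖v‖⟩ : ℂ) : H) v := by
  by_cases hsum : v + ((⟨0, ‖v‖⟩ : ℂ) : H) = 0
  · have hstar : star ((⟨0, ‖v‖⟩ : ℂ) : H) = v :=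
      (Quaternion.star_eq_neg.mpr rfl).trans (eq_neg_of_add_eq_zero_left hsum).symm
    simpa only [hstar] using isConj_coeComplex_star ⟨0, ‖v‖⟩
  · exact ⟨Units.mk0 _ hsum,
      semiconjBy_add_of_mul_self_eq (mul_self_eq_coeComplex_norm_of_re_eq_zero hv)⟩

theorem isConj_coeComplex_re_norm_im (a : H) : IsConj ((⟨a.re, ‖a.im‖⟩ : ℂ) : H) a := by
  obtain ⟨q, hq⟩ := isConj_coeComplex_norm_of_re_eq_zero a.re_im
  have hre : SemiconjBy (q : H) a.re a.re := (Quaternion.coe_commute a.re (q : H)).symm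
  have hw : (a.re : H) + ((⟨0, ‖a.im‖⟩ : ℂ) : H) = ((⟨a.re, ‖a.im‖⟩ : ℂ) : H) := by
    ext <;> simp
  have hsum := hre.add_right hq
  rw [hw, a.re_add_im] at hsum
  exact ⟨q, hsum⟩

theorem exists_eq_coeComplex_of_commute {y : H} {w : ℂ} (hw : w.im ≠ 0)
    (h : Commute y (w : H)) : ∃ z : ℂ, y = z := by
  have himJ := congrArg QuaternionAlgebra.imJ h.eq
  have himK := congrArg QuaternionAlgebra.imK h.eq
  simp only [Quaternion.imJ_mul, Quaternion.imK_mul, Quaternion.re_coeComplex,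
    Quaternion.imI_coeComplex, Quaternion.imJ_coeComplex, Quaternion.imK_coeComplex] at himJ himK
  have hJ : w.im * y.imJ = 0 := by linarith
  have hK : w.im * y.imK = 0 := by linarith
  exact ⟨⟨y.re, y.imI⟩, Quaternion.ext _ _ rfl rfl
    ((mul_eq_zero.mp hJ).resolve_left hw) ((mul_eq_zero.mp hK).resolve_left hw)⟩

theorem abelian_quaternionic_rep_conjugate_to_complex_general {ι : Type*} (f : ι → H)
    (hf : ∀ i j, Commute (f i) (f j)) :
    ∃ q : Hˣ, ∀ i, ∃ z : ℂ, ↑q⁻¹ * f i * q = toH z := by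
  simp only [toH_eq_coeComplex]
  by_cases hreal : ∀ i, (f i).im = 0
  · refine ⟨1, fun i => ⟨(f i).re, ?_⟩⟩
    have hre : f i = (f i).re := by simpa only [hreal i, add_zero] using (f i).re_add_im.symm
    rw [inv_one, Units.val_one, one_mul, mul_one, Quaternion.coeComplex_coe, ← hre]
  · obtain ⟨i₀, hi₀⟩ := not_forall.mp hreal
    obtain ⟨q, hq⟩ := isConj_coeComplex_re_norm_im (f i₀)
    have hcomm (i : ι) : Commute (↑q⁻¹ * f i * q) ((⟨(f i₀).re, ‖(f i₀).im‖⟩ : ℂ) : H) :=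
      (hq.units_inv_symm_left.mul_left (hf i i₀)).mul_left hq
    exact ⟨q, fun i => exists_eq_coeComplex_of_commute (norm_ne_zero_iff.mpr hi₀) (hcomm i)⟩

/-- Section 4.1: every quaternionic representation of a commutative group can be
conjugated into the complex numbers, i.e. every conjugacy class in
`Hom(Γ, ℍˣ)/ℍˣ` contains a complex representation. -/
theorem abelian_quaternionic_rep_conjugate_to_complex
    (G : Type*) [CommGroup G] (h : G →* Hˣ) :
    ∃ q : Hˣ, ∀ g : G, ∃ z : ℂ, z ≠ 0 ∧ ((q⁻¹ * h g * q : Hˣ) : H) = toH z :=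
  let ⟨q, hq⟩ := abelian_quaternionic_rep_conjugate_to_complex_general (fun g => (h g : H))
    fun g g' => ((Commute.all g g').map h).units_val
  ⟨q, fun g => (hq g).imp fun _ hz => ⟨by rintro rfl; exact (q⁻¹ * h g * q).ne_zero hz, hz⟩⟩
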